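/- For every u in the Schwartz space 𝒮(ℝ, ℂ⁴) and every λ ≥ 1, one has ⟨Qu, x²u⟩ + ⟨x²u, Qu⟩ ≥ −2‖u‖²; equivalently, Re⟨Qu, x²u⟩ ≥ −‖u‖². -/

import Mathlib

noncomputable section

open MeasureTheory

abbrev V4 : Type := EuclideanSpace ℂ (Fin 4)

/-- A `4 × 4` complex matrix acting on `ℂ⁴` as a continuous linear map. -/
def Mop (A : Matrix (Fin 4) (Fin 4) ℂ) : V4 →L[ℂ] V4 := Matrix.toEuclideanCLM (𝕜 := ℂ) A

/-- The `L²` inner product `⟨u, v⟩ = ∫ ⟨u(x), v(x)⟩ dx` (conjugate-linear in the first slot). -/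
def L2inner (u v : ℝ → V4) : ℂ := ∫ x : ℝ, (inner ℂ (u x) (v x) : ℂ)

/-- The `L²` norm `‖u‖ = (∫ ‖u(x)‖² dx)^{1/2}`. -/
def L2norm (u : ℝ → V4) : ℝ := Real.sqrt (∫ x : ℝ, ‖u x‖ ^ 2)

/-- The operator `D = −i d/dx`. -/
def Dop (u : ℝ → V4) : ℝ → V4 := fun x => (-Complex.I) • deriv u x

/-- The per-mode free Dirac Hamiltonian `H₀u = Γ¹Du + λgΓ²u + fu`. -/
def H0op (Γ1 Γ2 : Matrix (Fin 4) (Fin 4) ℂ) (g f : ℝ → ℝ) (lam : ℝ) (u : ℝ → V4) : ℝ → V4 :=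
  fun x => Mop Γ1 (Dop u x) + (lam * g x) • Mop Γ2 (u x) + f x • u x

/-- The operator `Qu = −u'' + λ²g²u`. -/
def Qop (g : ℝ → ℝ) (lam : ℝ) (u : ℝ → V4) : ℝ → V4 :=
  fun x => -(deriv (deriv u) x) + (lam ^ 2 * g x ^ 2) • u x

/-- The comparison operator `Nu = Qu + (1 + x²)u`. -/
def Nop (g : ℝ → ℝ) (lam : ℝ) (u : ℝ → V4) : ℝ → V4 :=
  fun x => Qop g lam u x + (1 + x ^ 2) • u x

/-! Multiplication by `x` does not commute with `Q`: one has `x Qu = Q(xu) + 2u'`. Moving one factor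
`x` across the inner product therefore gives `⟨Qu, x²u⟩ = ⟨Q(xu), xu⟩ + 2⟨u', xu⟩`. The first term
equals `‖(xu)'‖² + ∫ V ‖xu‖² ≥ 0`, where `V = λ²g²`, and integration by parts shows that the real
part of the second is exactly `-‖u‖²`. -/

open SchwartzMap InnerProductSpace RCLike

section InnerIntegral

variable {α 𝕜 E : Type*} [MeasurableSpace α] {μ : Measure α} [RCLike 𝕜] [NormedAddCommGroup E]

lemma integrable_sq_mul_norm_sq {g : α → ℝ} {f : α → E} {C : ℝ} (hg : AEStronglyMeasurable g μ)
    (hgC : ∀ᵐ x ∂μ, |g x| ≤ C) (hf : MemLp f 2 μ) :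
    Integrable (fun x => g x ^ 2 * ‖f x‖ ^ 2) μ := by
  refine (hf.integrable_norm_pow two_ne_zero).bdd_mul (c := C ^ 2) (hg.pow 2) ?_
  filter_upwards [hgC] with x hx
  rw [norm_pow, Real.norm_eq_abs]
  gcongr

variable [InnerProductSpace 𝕜 E]

lemma integral_inner_eq_conj (f g : α → E) :
    ∫ x, ⟪g x, f x⟫_𝕜 ∂μ = starRingEnd 𝕜 (∫ x, ⟪f x, g x⟫_𝕜 ∂μ) := by
  simp only [← integral_conj, inner_conj_symm]

lemma integral_inner_self (f : α → E) :
    ∫ x, ⟪f x, f x⟫_𝕜 ∂μ = ((∫ x, ‖f x‖ ^ 2 ∂μ : ℝ) : 𝕜) := by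
  simp only [inner_self_eq_norm_sq_to_K, ← ofReal_pow, integral_ofReal]

end InnerIntegral

lemma L2norm_sq (u : ℝ → V4) : L2norm u ^ 2 = ∫ x, ‖u x‖ ^ 2 :=
  Real.sq_sqrt (integral_nonneg fun _ => by positivity)

section PositionOperator

variable {E : Type*} [NormedAddCommGroup E] [NormedSpace ℝ E]

/-- The position operator `u ↦ (x ↦ x u(x))`, as an operator on Schwartz space so that
integration by parts for Schwartz functions applies to `xu`. -/
def positionOp : 𝓢(ℝ, E) →L[ℝ] 𝓢(ℝ, E) := smulLeftCLM E (fun x : ℝ => x)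

lemma positionOp_apply (u : 𝓢(ℝ, E)) (x : ℝ) : positionOp u x = x • u x :=
  smulLeftCLM_apply_apply (by fun_prop) u x

lemma integrable_sq_mul_sq_mul_norm_smul_sq {g : ℝ → ℝ} {C : ℝ} (hg : AEStronglyMeasurable g)
    (hgC : ∀ᵐ x, |g x| ≤ C) (c : ℝ) (u : 𝓢(ℝ, E)) :
    Integrable fun x => c ^ 2 * g x ^ 2 * ‖x • u x‖ ^ 2 := by
  simp only [← positionOp_apply, mul_assoc]
  exact (integrable_sq_mul_norm_sq hg hgC ((positionOp u).memLp 2)).const_mul (c ^ 2)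

lemma deriv_positionOp (u : 𝓢(ℝ, E)) (x : ℝ) :
    deriv (positionOp u) x = positionOp (derivCLM ℝ E u) x + u x := by
  have h : ⇑(positionOp u) = fun x => x • u x := funext (positionOp_apply u)
  rw [h, positionOp_apply, derivCLM_apply]
  simpa using ((hasDerivAt_id' x).fun_smul (u.hasDerivAt x)).deriv

lemma deriv_deriv_positionOp (u : 𝓢(ℝ, E)) (x : ℝ) :
    deriv (deriv (positionOp u)) x = x • deriv (deriv u) x + (2 : ℝ) • deriv u x := by
  have hD : ∀ v : 𝓢(ℝ, E), deriv v = derivCLM ℝ E v := fun v => (funext (derivCLM_apply ℝ v)).symm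
  have h : deriv (positionOp u) = ⇑(positionOp (derivCLM ℝ E u) + u) := funext (deriv_positionOp u)
  rw [h, hD, map_add, add_apply, derivCLM_apply, deriv_positionOp, positionOp_apply,
    derivCLM_apply, derivCLM_apply, hD u, two_smul, add_assoc]

/-- The Schrödinger operator `−d²/dx² + V` with a scalar potential `V`, on functions with values in
an arbitrary normed space; `Qop g lam` is the case `V = lam² g²`. -/
def schrodingerOp (V : ℝ → ℝ) (u : ℝ → E) : ℝ → E := fun x => -(deriv (deriv u) x) + V x • u x

lemma smul_schrodingerOp (V : ℝ → ℝ) (u : 𝓢(ℝ, E)) (x : ℝ) :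
    x • schrodingerOp V u x = schrodingerOp V (positionOp u) x + (2 : ℝ) • deriv u x := by
  simp only [schrodingerOp, deriv_deriv_positionOp, positionOp_apply]
  module

end PositionOperator

section WeightedForm

variable {𝕜 E : Type*} [RCLike 𝕜] [NormedAddCommGroup E] [InnerProductSpace 𝕜 E]
  [NormedSpace ℝ E] [IsScalarTower ℝ 𝕜 E]

lemma integrable_inner_schwartz {D : Type*} [NormedAddCommGroup D] [NormedSpace ℝ D]
    [MeasurableSpace D] [BorelSpace D] [SecondCountableTopology D] {μ : Measure D}
    [μ.HasTemperateGrowth] (f g : 𝓢(D, E)) : Integrable (fun x => ⟪f x, g x⟫_𝕜) μ :=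
  (pairing (isBoundedBilinearMap_inner (𝕜 := 𝕜)).toContinuousLinearMap f g).integrable

lemma integral_inner_deriv_left (f g : 𝓢(ℝ, E)) :
    ∫ x, ⟪deriv f x, g x⟫_𝕜 = -∫ x, ⟪f x, deriv g x⟫_𝕜 :=
  neg_eq_iff_eq_neg.1 (integral_bilinear_deriv_right_eq_neg_left f g
    (isBoundedBilinearMap_inner (𝕜 := 𝕜)).toContinuousLinearMap).symm

lemma two_mul_re_integral_inner_deriv_positionOp (u : 𝓢(ℝ, E)) :
    2 * re (∫ x, ⟪deriv u x, positionOp u x⟫_𝕜) = -∫ x, ‖u x‖ ^ 2 := by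
  have hswap (x : ℝ) : ⟪u x, positionOp (derivCLM ℝ E u) x⟫_𝕜 = ⟪positionOp u x, deriv u x⟫_𝕜 := by
    rw [positionOp_apply, positionOp_apply, derivCLM_apply, inner_smul_right_eq_smul,
      inner_smul_left_eq_smul]
  have hparts : ∫ x, ⟪deriv u x, positionOp u x⟫_𝕜
      = -(starRingEnd 𝕜 (∫ x, ⟪deriv u x, positionOp u x⟫_𝕜)
        + ((∫ x, ‖u x‖ ^ 2 : ℝ) : 𝕜)) := by
    rw [← integral_inner_eq_conj, ← integral_inner_self, integral_inner_deriv_left]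
    simp only [deriv_positionOp, inner_add_right, ← hswap]
    rw [integral_add (integrable_inner_schwartz _ _) (integrable_inner_schwartz _ _)]
  have hre := congrArg re hparts
  rw [map_neg, map_add, conj_re, ofReal_re] at hre
  linarith

lemma inner_schrodingerOp_self (V : ℝ → ℝ) (v : ℝ → E) (x : ℝ) :
    ⟪schrodingerOp V v x, v x⟫_𝕜
      = -⟪deriv (deriv v) x, v x⟫_𝕜 + ((V x * ‖v x‖ ^ 2 : ℝ) : 𝕜) := by
  rw [schrodingerOp, inner_add_left, inner_neg_left, inner_smul_left_eq_smul,
    inner_self_eq_norm_sq_to_K, real_smul_eq_coe_mul, ofReal_mul, ofReal_pow]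

lemma integrable_inner_deriv_deriv_self (v : 𝓢(ℝ, E)) :
    Integrable fun x => ⟪deriv (deriv v) x, v x⟫_𝕜 :=
  integrable_inner_schwartz (derivCLM ℝ E (derivCLM ℝ E v)) v

lemma integral_inner_deriv_deriv_self (v : 𝓢(ℝ, E)) :
    ∫ x, ⟪deriv (deriv v) x, v x⟫_𝕜 = -((∫ x, ‖deriv v x‖ ^ 2 : ℝ) : 𝕜) :=
  (integral_inner_deriv_left (derivCLM ℝ E v) v).trans (congrArg _ (integral_inner_self _))

lemma integrable_inner_schrodingerOp_self {V : ℝ → ℝ} {v : 𝓢(ℝ, E)}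
    (hVv : Integrable fun x => V x * ‖v x‖ ^ 2) :
    Integrable fun x => ⟪schrodingerOp V v x, v x⟫_𝕜 := by
  simp only [inner_schrodingerOp_self]
  exact (integrable_inner_deriv_deriv_self v).neg.add hVv.ofReal

lemma integral_inner_schrodingerOp_self {V : ℝ → ℝ} {v : 𝓢(ℝ, E)}
    (hVv : Integrable fun x => V x * ‖v x‖ ^ 2) :
    ∫ x, ⟪schrodingerOp V v x, v x⟫_𝕜
      = (((∫ x, ‖deriv v x‖ ^ 2) + ∫ x, V x * ‖v x‖ ^ 2 : ℝ) : 𝕜) := by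
  simp only [inner_schrodingerOp_self]
  rw [integral_add (integrable_inner_deriv_deriv_self v).fun_neg hVv.ofReal, integral_neg,
    integral_inner_deriv_deriv_self, neg_neg, integral_ofReal, ofReal_add]

lemma integral_inner_schrodingerOp_sq_smul {V : ℝ → ℝ} {u : 𝓢(ℝ, E)}
    (hVu : Integrable fun x => V x * ‖x • u x‖ ^ 2) :
    ∫ x, ⟪schrodingerOp V u x, (x ^ 2 : ℝ) • u x⟫_𝕜
      = (∫ x, ⟪schrodingerOp V (positionOp u) x, positionOp u x⟫_𝕜)
        + 2 * ∫ x, ⟪deriv u x, positionOp u x⟫_𝕜 := by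
  simp only [← positionOp_apply] at hVu
  rw [← integral_const_mul, ← integral_add (integrable_inner_schrodingerOp_self hVu)
    ((integrable_inner_schwartz (derivCLM ℝ E u) (positionOp u)).const_mul 2)]
  congr 1 with x
  calc ⟪schrodingerOp V u x, (x ^ 2 : ℝ) • u x⟫_𝕜
      = ⟪x • schrodingerOp V u x, positionOp u x⟫_𝕜 := by
        rw [positionOp_apply, sq, mul_smul, inner_smul_right_eq_smul, inner_smul_left_eq_smul]
    _ = ⟪schrodingerOp V (positionOp u) x, positionOp u x⟫_𝕜
          + 2 * ⟪deriv u x, positionOp u x⟫_𝕜 := by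
        rw [smul_schrodingerOp, inner_add_left, inner_smul_left_eq_smul, real_smul_eq_coe_mul,
          ofReal_ofNat]

theorem re_integral_inner_schrodingerOp_sq_smul {V : ℝ → ℝ} {u : 𝓢(ℝ, E)}
    (hVu : Integrable fun x => V x * ‖x • u x‖ ^ 2) :
    re (∫ x, ⟪schrodingerOp V u x, (x ^ 2 : ℝ) • u x⟫_𝕜)
      = (∫ x, ‖deriv (positionOp u) x‖ ^ 2) + (∫ x, V x * ‖x • u x‖ ^ 2) - ∫ x, ‖u x‖ ^ 2 := by
  rw [integral_inner_schrodingerOp_sq_smul hVu, map_add, ← ofReal_ofNat, re_ofReal_mul,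
    two_mul_re_integral_inner_deriv_positionOp]
  simp only [← positionOp_apply] at hVu ⊢
  rw [integral_inner_schrodingerOp_self hVu, ofReal_re, sub_eq_add_neg]

theorem Q_weight_form_lower_bound_general {V : ℝ → ℝ} (hV : ∀ x, 0 ≤ V x) {u : 𝓢(ℝ, E)}
    (hVu : Integrable fun x => V x * ‖x • u x‖ ^ 2) :
    -(2 * ∫ x, ‖u x‖ ^ 2) ≤
      re ((∫ x, ⟪schrodingerOp V u x, (x ^ 2 : ℝ) • u x⟫_𝕜)
        + ∫ x, ⟪(x ^ 2 : ℝ) • u x, schrodingerOp V u x⟫_𝕜) ∧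
    -(∫ x, ‖u x‖ ^ 2) ≤ re (∫ x, ⟪schrodingerOp V u x, (x ^ 2 : ℝ) • u x⟫_𝕜) := by
  have hkinetic : 0 ≤ ∫ x, ‖deriv (positionOp u) x‖ ^ 2 := integral_nonneg fun _ => by positivity
  have hpotential : 0 ≤ ∫ x, V x * ‖x • u x‖ ^ 2 :=
    integral_nonneg fun x => mul_nonneg (hV x) (by positivity)
  rw [integral_inner_eq_conj (schrodingerOp V u), map_add, conj_re,
    re_integral_inner_schrodingerOp_sq_smul hVu]
  constructor <;> linarith

end WeightedForm

/-- for every Schwartz `u` and every `λ ≥ 1`,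
`⟨Qu, x²u⟩ + ⟨x²u, Qu⟩ ≥ −2‖u‖²`; equivalently `Re⟨Qu, x²u⟩ ≥ −‖u‖²`. -/
theorem Q_weight_form_lower_bound
    (g : ℝ → ℝ) (hg_smooth : ContDiff ℝ (⊤ : ℕ∞) g) (Cb : ℝ) (hg_bdd : ∀ x : ℝ, |g x| ≤ Cb)
    (u : SchwartzMap ℝ V4) (lam : ℝ) (hlam : 1 ≤ lam) :
    -(2 * L2norm ⇑u ^ 2) ≤
      (L2inner (Qop g lam ⇑u) (fun x => (x ^ 2 : ℝ) • u x)
        + L2inner (fun x => (x ^ 2 : ℝ) • u x) (Qop g lam ⇑u)).re ∧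
    -(L2norm ⇑u ^ 2) ≤ (L2inner (Qop g lam ⇑u) (fun x => (x ^ 2 : ℝ) • u x)).re := by
  rw [L2norm_sq]
  exact Q_weight_form_lower_bound_general (𝕜 := ℂ)
    (fun x => mul_nonneg (sq_nonneg lam) (sq_nonneg (g x)))
    (integrable_sq_mul_sq_mul_norm_smul_sq hg_smooth.continuous.aestronglyMeasurable
      (ae_of_all _ hg_bdd) lam u)
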